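/- arXiv:2406.00982 — 2 statements merged into one kernel-verified Lean document; each statement's English description precedes it below -/
import Mathlib

section
/- Let I ⊆ ℝ be an open interval and let t ↦ ξ(t) = (x₁(t), x₂(t), x₃(t), x₄(t), w(t)) be a C¹ curve in ℝ⁵ with 1 + x₃(t) − w(t)·x₄(t) ≠ 0 for all t ∈ I, and let t ↦ v(t) = (v₁(t), v₂(t)) ∈ ℝ² be continuous. Suppose ξ satisfies ξ̇(t) = F(ξ(t)) + μ₁(t)G₁ + μ₂(t)G₂, where F(ξ) = (x₂ + 2x₂(x₃ + x₄w), x₃ + x₄w, 0, (1 + x₃)w, 0), G₁ = (0,0,1,0,0), G₂ = (0,0,0,0,1), and μ(t) is determined by [[1, x₄(t)],[w(t), 1 + x₃(t)]]·μ(t) = (v₁(t) − (1 + x₃(t))w(t)², v₂(t)). Then the curve z(t) := Φ(ξ(t)) = (x₁(t) − x₂(t)², x₂(t), x₃(t) + x₄(t)w(t), x₄(t), (1 + x₃(t))w(t)) satisfies ż₁ = z₂, ż₂ = z₃, ż₃ = v₁, ż₄ = z₅, ż₅ = v₂ on I. -/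
/-!
The functions `x₁ - x₂²` and `x₄` are linearizing outputs. Along the extended system the input
first appears in the third derivative of the former (the terms `2x₂(x₃ + x₄w)` cancel) and in the
second derivative of the latter. These two derivatives are `μ₁ + x₄μ₂ + (1 + x₃)w²` and
`wμ₁ + (1 + x₃)μ₂`, and the feedback law says that they are `v₁` and `v₂`.
-/

section VectorFields

variable {R : Type*} [CommRing R]

/-- The right-hand side `F(p) + u₁G₁ + u₂G₂` of the dynamically extended system, at the state
`p = (x₁, x₂, x₃, x₄, w)` and the input `u`. -/
def extendedField (p : Fin 5 → R) (u : Fin 2 → R) : Fin 5 → R :=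
  ![p 1 + 2 * p 1 * (p 2 + p 3 * p 4), p 2 + p 3 * p 4, 0, (1 + p 2) * p 4, 0] +
    u 0 • ![0, 0, 1, 0, 0] + u 1 • ![0, 0, 0, 0, 1]

/-- The linearizing coordinate change `Φ`, which collects the outputs `x₁ - x₂²` and `x₄` together
with their derivatives along the extended system, up to the order at which the input appears. -/
def linearizingCoord (p : Fin 5 → R) : Fin 5 → R :=
  ![p 0 - p 1 ^ 2, p 1, p 2 + p 3 * p 4, p 3, (1 + p 2) * p 4]

/-- The right-hand side `Az + Bv` of the Brunovský system made of a chain of three integrators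
driven by `v₁` and a chain of two driven by `v₂`. -/
def brunovskyField (z : Fin 5 → R) (v : Fin 2 → R) : Fin 5 → R :=
  ![z 1, z 2, v 0, z 4, v 1]

theorem extendedField_eq (p : Fin 5 → R) (u : Fin 2 → R) :
    extendedField p u =
      ![p 1 + 2 * p 1 * (p 2 + p 3 * p 4), p 2 + p 3 * p 4, u 0, (1 + p 2) * p 4, u 1] := by
  simp [extendedField]

end VectorFields

section Trajectories

variable {𝕜 A : Type*} [NontriviallyNormedField 𝕜] [NormedCommRing A] [NormedAlgebra 𝕜 A]
  {ξ : 𝕜 → Fin 5 → A} {u v : Fin 2 → A} {s : Set 𝕜} {t : 𝕜}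

theorem hasDerivWithinAt_extendedField_iff :
    HasDerivWithinAt ξ (extendedField (ξ t) u) s t ↔
      HasDerivWithinAt (fun τ => ξ τ 0) (ξ t 1 + 2 * ξ t 1 * (ξ t 2 + ξ t 3 * ξ t 4)) s t ∧
      HasDerivWithinAt (fun τ => ξ τ 1) (ξ t 2 + ξ t 3 * ξ t 4) s t ∧
      HasDerivWithinAt (fun τ => ξ τ 2) (u 0) s t ∧
      HasDerivWithinAt (fun τ => ξ τ 3) ((1 + ξ t 2) * ξ t 4) s t ∧
      HasDerivWithinAt (fun τ => ξ τ 4) (u 1) s t := by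
  rw [extendedField_eq, hasDerivWithinAt_pi]
  simp [Fin.forall_fin_succ]

theorem hasDerivWithinAt_linearizingCoord_iff :
    HasDerivWithinAt (fun τ => linearizingCoord (ξ τ))
        (brunovskyField (linearizingCoord (ξ t)) v) s t ↔
      HasDerivWithinAt (fun τ => ξ τ 0 - ξ τ 1 ^ 2) (ξ t 1) s t ∧
      HasDerivWithinAt (fun τ => ξ τ 1) (ξ t 2 + ξ t 3 * ξ t 4) s t ∧
      HasDerivWithinAt (fun τ => ξ τ 2 + ξ τ 3 * ξ τ 4) (v 0) s t ∧
      HasDerivWithinAt (fun τ => ξ τ 3) ((1 + ξ t 2) * ξ t 4) s t ∧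
      HasDerivWithinAt (fun τ => (1 + ξ τ 2) * ξ τ 4) (v 1) s t := by
  rw [hasDerivWithinAt_pi]
  simp [Fin.forall_fin_succ, linearizingCoord, brunovskyField]

theorem trajectory_linearization_general
    (hu₁ : u 0 + ξ t 3 * u 1 = v 0 - (1 + ξ t 2) * ξ t 4 ^ 2)
    (hu₂ : ξ t 4 * u 0 + (1 + ξ t 2) * u 1 = v 1)
    (hξ : HasDerivWithinAt ξ (extendedField (ξ t) u) s t) :
    HasDerivWithinAt (fun τ => linearizingCoord (ξ τ))
      (brunovskyField (linearizingCoord (ξ t)) v) s t := by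
  obtain ⟨hx₁, hx₂, hx₃, hx₄, hw⟩ := hasDerivWithinAt_extendedField_iff.1 hξ
  have hz₁ : HasDerivWithinAt (fun τ => ξ τ 0 - ξ τ 1 ^ 2) (ξ t 1) s t :=
    (hx₁.fun_sub (hx₂.fun_pow 2)).congr_deriv (by ring)
  have hz₃ : HasDerivWithinAt (fun τ => ξ τ 2 + ξ τ 3 * ξ τ 4) (v 0) s t :=
    (hx₃.fun_add (hx₄.fun_mul hw)).congr_deriv (by linear_combination hu₁)
  have hz₅ : HasDerivWithinAt (fun τ => (1 + ξ τ 2) * ξ τ 4) (v 1) s t :=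
    ((hx₃.const_add 1).fun_mul hw).congr_deriv (by linear_combination hu₂)
  exact hasDerivWithinAt_linearizingCoord_iff.2 ⟨hz₁, hx₂, hz₃, hx₄, hz₅⟩

end Trajectories

/-- Trajectory-level linearization: if a `C¹` curve `ξ = (x₁,x₂,x₃,x₄,w)` on an open interval
`I`, with `1 + x₃ − w·x₄ ≠ 0` on `I`, solves `ξ̇ = F(ξ) + μ₁G₁ + μ₂G₂` where `μ` solves
`[[1, x₄],[w, 1+x₃]]·μ = (v₁ − (1+x₃)w², v₂)`, then `z := Φ(ξ)` solves the Brunovský system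
`ż₁ = z₂, ż₂ = z₃, ż₃ = v₁, ż₄ = z₅, ż₅ = v₂` on `I`. -/
theorem trajectory_linearization
    (a b : ℝ) (I : Set ℝ) (hI : I = Set.Ioo a b)
    (F : (Fin 5 → ℝ) → (Fin 5 → ℝ)) (G₁ G₂ : Fin 5 → ℝ)
    (hF : F = fun p => ![p 1 + 2 * p 1 * (p 2 + p 3 * p 4), p 2 + p 3 * p 4, 0,
      (1 + p 2) * p 4, 0])
    (hG₁ : G₁ = ![0, 0, 1, 0, 0]) (hG₂ : G₂ = ![0, 0, 0, 0, 1])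
    (ξ : ℝ → (Fin 5 → ℝ)) (v μ : ℝ → (Fin 2 → ℝ))
    (hv : ContinuousOn v I)
    (hreg : ∀ t ∈ I, 1 + ξ t 2 - ξ t 4 * ξ t 3 ≠ 0)
    (hμ1 : ∀ t ∈ I, μ t 0 + ξ t 3 * μ t 1 = v t 0 - (1 + ξ t 2) * (ξ t 4) ^ 2)
    (hμ2 : ∀ t ∈ I, ξ t 4 * μ t 0 + (1 + ξ t 2) * μ t 1 = v t 1)
    (hode : ∀ t ∈ I, HasDerivAt ξ (F (ξ t) + μ t 0 • G₁ + μ t 1 • G₂) t) :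
    ∀ t ∈ I,
      HasDerivAt (fun s => ξ s 0 - (ξ s 1) ^ 2) (ξ t 1) t ∧
      HasDerivAt (fun s => ξ s 1) (ξ t 2 + ξ t 3 * ξ t 4) t ∧
      HasDerivAt (fun s => ξ s 2 + ξ s 3 * ξ s 4) (v t 0) t ∧
      HasDerivAt (fun s => ξ s 3) ((1 + ξ t 2) * ξ t 4) t ∧
      HasDerivAt (fun s => (1 + ξ s 2) * ξ s 4) (v t 1) t := by
  subst hF hG₁ hG₂
  simp only [← hasDerivWithinAt_univ] at hode ⊢
  exact fun t ht => hasDerivWithinAt_linearizingCoord_iff.1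
    (trajectory_linearization_general (hμ1 t ht) (hμ2 t ht) (hode t ht))
end

section
/- Let M, N ⊆ ℝⁿ be open sets and Φ : M → N a diffeomorphism. Define R_Φ : N × ℝⁿ → N × ℝⁿ... by R_Φ(z, ż) := (z, z + ż), restricted to the open set of (z, ż) with z + ż ∈ N; R_Φ is a discretization map on N. Then the lifted map R(ξ, ξ̇) := ((Φ⁻¹ × Φ⁻¹) ∘ R_Φ ∘ TΦ)(ξ, ξ̇) = (ξ, Φ⁻¹(Φ(ξ) + DΦ(ξ)·ξ̇)), defined on the open set of (ξ, ξ̇) ∈ M × ℝⁿ with Φ(ξ) + DΦ(ξ)·ξ̇ ∈ N, is a discretization map on M. -/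
/-!
Discretization maps pull back along any smooth `Φ : M → N` with a smooth left inverse `Ψ : N → M`.
By the chain rule, the difference of the derivatives of the two components of `(Ψ × Ψ) ∘ R ∘ TΦ`
along the fibre at `0` is `DΨ(Φ x) ∘ (D R² - D R¹) ∘ DΦ(x) = DΨ(Φ x) ∘ DΦ(x) = D(Ψ ∘ Φ)(x) = id`.
The domain is open because `TΦ` is continuous on `M × ℝⁿ`.
-/

/-- A discretization map on an open set `U ⊆ ℝⁿ`. -/
def IsDiscretizationMap {n : ℕ} (U : Set (Fin n → ℝ))
    (O : Set ((Fin n → ℝ) × (Fin n → ℝ)))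
    (Rd : ((Fin n → ℝ) × (Fin n → ℝ)) → ((Fin n → ℝ) × (Fin n → ℝ))) : Prop :=
  IsOpen O ∧ O ⊆ U ×ˢ (Set.univ : Set (Fin n → ℝ)) ∧
  (∀ x ∈ U, ((x, (0 : Fin n → ℝ))) ∈ O) ∧
  ContDiffOn ℝ (⊤ : ℕ∞) Rd O ∧
  (∀ p ∈ O, (Rd p).1 ∈ U ∧ (Rd p).2 ∈ U) ∧
  (∀ x ∈ U, Rd (x, 0) = (x, x)) ∧
  (∀ x ∈ U,
    fderiv ℝ (fun v => (Rd (x, v)).2) 0 - fderiv ℝ (fun v => (Rd (x, v)).1) 0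
      = ContinuousLinearMap.id ℝ (Fin n → ℝ))

open Set Topology

section Calculus

variable {𝕜 : Type*} [NontriviallyNormedField 𝕜]
  {E : Type*} [NormedAddCommGroup E] [NormedSpace 𝕜 E]
  {F : Type*} [NormedAddCommGroup F] [NormedSpace 𝕜 F]

variable (𝕜) in
/-- The tangent lift `TΦ (ξ, ξ') = (Φ ξ, DΦ(ξ) ξ')` of a map between normed spaces, with the
tangent bundles identified with `E × E` and `F × F`. It is meaningful only over points where `Φ`
is differentiable: elsewhere `fderiv` is `0`. -/
noncomputable def tangentLift (Φ : E → F) (p : E × E) : F × F :=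
  (Φ p.1, fderiv 𝕜 Φ p.1 p.2)

theorem tangentLift_zero (Φ : E → F) (x : E) : tangentLift 𝕜 Φ (x, 0) = (Φ x, 0) := by
  simp only [tangentLift, map_zero]

theorem contDiffOn_tangentLift {Φ : E → F} {M : Set E} {k l : WithTop ℕ∞}
    (hΦ : ContDiffOn 𝕜 l Φ M) (hM : IsOpen M) (hkl : k + 1 ≤ l) :
    ContDiffOn 𝕜 k (tangentLift 𝕜 Φ) (M ×ˢ univ) := by
  have hfst : MapsTo (Prod.fst : E × E → E) (M ×ˢ univ) M := fun _ hp => hp.1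
  have hDΦ : ContDiffOn 𝕜 k (fderiv 𝕜 Φ) M := hΦ.fderiv_of_isOpen hM hkl
  exact ((hΦ.of_le (le_self_add.trans hkl)).comp contDiffOn_fst hfst).prodMk
    ((hDΦ.comp contDiffOn_fst hfst).clm_apply contDiffOn_snd)

theorem fderiv_comp_fderiv_of_eventually_leftInverse {Φ : E → F} {Ψ : F → E} {x : E}
    (hΨ : DifferentiableAt 𝕜 Ψ (Φ x)) (hΦ : DifferentiableAt 𝕜 Φ x)
    (hinv : ∀ᶠ y in 𝓝 x, Ψ (Φ y) = y) :
    fderiv 𝕜 Ψ (Φ x) ∘L fderiv 𝕜 Φ x = ContinuousLinearMap.id 𝕜 E := by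
  have hcomp : Ψ ∘ Φ =ᶠ[𝓝 x] id := hinv
  rw [← fderiv_comp x hΨ hΦ, hcomp.fderiv_eq, fderiv_id]

variable {G H : Type*} [NormedAddCommGroup G] [NormedSpace 𝕜 G]
  [NormedAddCommGroup H] [NormedSpace 𝕜 H] {g : G → H} {z : G}

theorem fderiv_comp_comp_clm_zero {f : F → G} (L : E →L[𝕜] F)
    (hz : f 0 = z) (hg : DifferentiableAt 𝕜 g z) (hf : DifferentiableAt 𝕜 f 0) :
    fderiv 𝕜 (fun v => g (f (L v))) 0 = fderiv 𝕜 g z ∘L fderiv 𝕜 f 0 ∘L L := by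
  have hfL : HasFDerivAt (f ∘ L) (fderiv 𝕜 f 0 ∘L L) 0 :=
    HasFDerivAt.comp 0 (by simpa only [map_zero] using hf.hasFDerivAt) L.hasFDerivAt
  have hLz : (f ∘ L) 0 = z := by rw [Function.comp_apply, map_zero, hz]
  exact (HasFDerivAt.comp 0 (hLz ▸ hg.hasFDerivAt) hfL).fderiv

theorem fderiv_comp_comp_clm_zero_sub {f₁ f₂ : F → G} (L : E →L[𝕜] F)
    (hz₁ : f₁ 0 = z) (hz₂ : f₂ 0 = z) (hg : DifferentiableAt 𝕜 g z)
    (hf₁ : DifferentiableAt 𝕜 f₁ 0) (hf₂ : DifferentiableAt 𝕜 f₂ 0) :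
    fderiv 𝕜 (fun v => g (f₁ (L v))) 0 - fderiv 𝕜 (fun v => g (f₂ (L v))) 0 =
      fderiv 𝕜 g z ∘L (fderiv 𝕜 f₁ 0 - fderiv 𝕜 f₂ 0) ∘L L := by
  rw [fderiv_comp_comp_clm_zero L hz₁ hg hf₁, fderiv_comp_comp_clm_zero L hz₂ hg hf₂,
    ContinuousLinearMap.sub_comp, ContinuousLinearMap.comp_sub]

end Calculus

namespace IsDiscretizationMap

variable {m n : ℕ} {U : Set (Fin n → ℝ)} {O : Set ((Fin n → ℝ) × (Fin n → ℝ))}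
  {R R' : (Fin n → ℝ) × (Fin n → ℝ) → (Fin n → ℝ) × (Fin n → ℝ)}

theorem isOpen (hR : IsDiscretizationMap U O R) : IsOpen U := by
  obtain ⟨hO, hOU, hzero, -⟩ := hR
  have hU : U = (fun x => (x, 0)) ⁻¹' O := Subset.antisymm hzero fun _ hx => (hOU hx).1
  exact hU ▸ hO.preimage (by fun_prop)

theorem differentiableAt_fibre (hR : IsDiscretizationMap U O R) {x : Fin n → ℝ} (hx : x ∈ U) :
    DifferentiableAt ℝ (fun v => R (x, v)) 0 := by
  obtain ⟨hO, -, hzero, hsmooth, -⟩ := hR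
  have hRx : DifferentiableAt ℝ R (x, 0) :=
    (hsmooth.contDiffAt (hO.mem_nhds (hzero x hx))).differentiableAt (by simp)
  exact hRx.comp 0 (by fun_prop)

theorem congr (hR : IsDiscretizationMap U O R) (heq : EqOn R' R O) :
    IsDiscretizationMap U O R' := by
  obtain ⟨hO, hOU, hzero, hsmooth, hmaps, hdiag, hderiv⟩ := hR
  refine ⟨hO, hOU, hzero, hsmooth.congr heq, fun p hp => heq hp ▸ hmaps p hp,
    fun x hx => (heq (hzero x hx)).trans (hdiag x hx), fun x hx => ?_⟩
  have hfibre : (fun v => R' (x, v)) =ᶠ[𝓝 0] fun v => R (x, v) :=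
    ((Continuous.prodMk_right x).tendsto 0).eventually
      (heq.eventuallyEq_of_mem (hO.mem_nhds (hzero x hx)))
  have hsnd : (fun v => (R' (x, v)).2) =ᶠ[𝓝 0] fun v => (R (x, v)).2 := hfibre.fun_comp Prod.snd
  have hfst : (fun v => (R' (x, v)).1) =ᶠ[𝓝 0] fun v => (R (x, v)).1 := hfibre.fun_comp Prod.fst
  rw [hsnd.fderiv_eq, hfst.fderiv_eq, hderiv x hx]

theorem euler (hU : IsOpen U) :
    IsDiscretizationMap U {p | p.1 ∈ U ∧ p.1 + p.2 ∈ U} (fun p => (p.1, p.1 + p.2)) := by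
  refine ⟨?_, fun p hp => ⟨hp.1, trivial⟩, fun x hx => ⟨hx, by rwa [add_zero]⟩, by fun_prop,
    fun p hp => hp, fun x _ => by simp only [add_zero], fun x _ => ?_⟩
  · exact (hU.preimage continuous_fst).inter (hU.preimage (continuous_fst.add continuous_snd))
  · rw [fderiv_const_add, fderiv_const_apply, sub_zero, fderiv_fun_id]

theorem fderiv_snd_sub_fderiv_fst_comp_tangentLift (hR : IsDiscretizationMap U O R)
    {Φ : (Fin m → ℝ) → (Fin n → ℝ)} {Ψ : (Fin n → ℝ) → (Fin m → ℝ)} {x : Fin m → ℝ}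
    (hx : Φ x ∈ U) (hΦ : DifferentiableAt ℝ Φ x) (hΨ : DifferentiableAt ℝ Ψ (Φ x))
    (hinv : ∀ᶠ y in 𝓝 x, Ψ (Φ y) = y) :
    fderiv ℝ (fun v => Ψ (R (tangentLift ℝ Φ (x, v))).2) 0 -
      fderiv ℝ (fun v => Ψ (R (tangentLift ℝ Φ (x, v))).1) 0 =
        ContinuousLinearMap.id ℝ (Fin m → ℝ) := by
  have hfibre := hR.differentiableAt_fibre hx
  obtain ⟨-, -, -, -, -, hdiag, hderiv⟩ := hR
  have hdiagx : R (Φ x, 0) = (Φ x, Φ x) := hdiag _ hx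
  calc
    _ = fderiv ℝ Ψ (Φ x) ∘L
          (fderiv ℝ (fun w => (R (Φ x, w)).2) 0 - fderiv ℝ (fun w => (R (Φ x, w)).1) 0) ∘L
            fderiv ℝ Φ x :=
      fderiv_comp_comp_clm_zero_sub _ (congrArg Prod.snd hdiagx) (congrArg Prod.fst hdiagx) hΨ
        hfibre.snd hfibre.fst
    _ = fderiv ℝ Ψ (Φ x) ∘L fderiv ℝ Φ x := by
      rw [hderiv _ hx, ContinuousLinearMap.id_comp]
    _ = ContinuousLinearMap.id ℝ (Fin m → ℝ) :=
      fderiv_comp_fderiv_of_eventually_leftInverse hΨ hΦ hinv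

theorem comp_tangentLift (hR : IsDiscretizationMap U O R) {M : Set (Fin m → ℝ)} (hM : IsOpen M)
    {Φ : (Fin m → ℝ) → (Fin n → ℝ)} {Ψ : (Fin n → ℝ) → (Fin m → ℝ)}
    (hΦ : ContDiffOn ℝ (⊤ : ℕ∞) Φ M) (hΨ : ContDiffOn ℝ (⊤ : ℕ∞) Ψ U)
    (hΦU : MapsTo Φ M U) (hΨM : MapsTo Ψ U M) (hinv : LeftInvOn Ψ Φ M) :
    IsDiscretizationMap M (M ×ˢ univ ∩ tangentLift ℝ Φ ⁻¹' O)
      (Prod.map Ψ Ψ ∘ R ∘ tangentLift ℝ Φ) := by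
  have ⟨hO, _, hzero, hsmooth, hmaps, hdiag, _⟩ := hR
  have hTΦ : ContDiffOn ℝ (⊤ : ℕ∞) (tangentLift ℝ Φ) (M ×ˢ univ) :=
    contDiffOn_tangentLift hΦ hM (by simp)
  refine ⟨hTΦ.continuousOn.isOpen_inter_preimage (hM.prod isOpen_univ) hO, inter_subset_left,
    fun x hx => ⟨⟨hx, trivial⟩, ?_⟩, ?_, fun p hp => ?_, fun x hx => ?_, fun x hx => ?_⟩
  · simpa only [mem_preimage, tangentLift_zero] using hzero _ (hΦU hx)
  · exact (hΨ.prodMap hΨ).comp (hsmooth.comp (hTΦ.mono inter_subset_left) fun _ hp => hp.2)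
      fun p hp => hmaps _ hp.2
  · exact (hmaps _ hp.2).imp (@hΨM _) (@hΨM _)
  · simp only [Function.comp_apply, tangentLift_zero, hdiag _ (hΦU hx), Prod.map_apply, hinv hx]
  · have hΦx : DifferentiableAt ℝ Φ x :=
      (hΦ.contDiffAt (hM.mem_nhds hx)).differentiableAt (by simp)
    have hΨx : DifferentiableAt ℝ Ψ (Φ x) :=
      (hΨ.contDiffAt (hR.isOpen.mem_nhds (hΦU hx))).differentiableAt (by simp)
    exact hR.fderiv_snd_sub_fderiv_fst_comp_tangentLift (hΦU hx) hΦx hΨx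
      (Filter.eventually_of_mem (hM.mem_nhds hx) hinv)

end IsDiscretizationMap

theorem lifted_euler_discretization_map_general {m n : ℕ}
    (M : Set (Fin m → ℝ)) (N : Set (Fin n → ℝ)) (hM : IsOpen M) (hN : IsOpen N)
    (Φ : (Fin m → ℝ) → (Fin n → ℝ)) (Ψ : (Fin n → ℝ) → (Fin m → ℝ))
    (hΦ : ContDiffOn ℝ (⊤ : ℕ∞) Φ M) (hΨ : ContDiffOn ℝ (⊤ : ℕ∞) Ψ N)
    (hΦN : MapsTo Φ M N) (hΨM : MapsTo Ψ N M) (hinv : LeftInvOn Ψ Φ M) :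
    IsDiscretizationMap N {p | p.1 ∈ N ∧ p.1 + p.2 ∈ N} (fun p => (p.1, p.1 + p.2)) ∧
    IsDiscretizationMap M {p | p.1 ∈ M ∧ Φ p.1 + fderiv ℝ Φ p.1 p.2 ∈ N}
      (fun p => (p.1, Ψ (Φ p.1 + fderiv ℝ Φ p.1 p.2))) := by
  have heuler := IsDiscretizationMap.euler hN
  have hdomain : {p : (Fin m → ℝ) × (Fin m → ℝ) | p.1 ∈ M ∧ Φ p.1 + fderiv ℝ Φ p.1 p.2 ∈ N} =
      M ×ˢ univ ∩ tangentLift ℝ Φ ⁻¹' {q | q.1 ∈ N ∧ q.1 + q.2 ∈ N} :=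
    Set.ext fun _ => ⟨fun hp => ⟨⟨hp.1, trivial⟩, hΦN hp.1, hp.2⟩, fun hp => ⟨hp.1.1, hp.2.2⟩⟩
  rw [hdomain]
  refine ⟨heuler, (heuler.comp_tangentLift hM hΦ hΨ hΦN hΨM hinv).congr fun p hp => ?_⟩
  exact Prod.ext (hinv hp.1.1).symm rfl

/-- The Euler-type map `R_Φ(z, ż) := (z, z + ż)` (restricted to `{(z,ż) | z ∈ N, z + ż ∈ N}`)
is a discretization map on `N`, and its lift
`R(ξ, ξ̇) := ((Φ⁻¹ × Φ⁻¹) ∘ R_Φ ∘ TΦ)(ξ, ξ̇) = (ξ, Φ⁻¹(Φ(ξ) + DΦ(ξ)·ξ̇))` through a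
diffeomorphism `Φ : M → N` is a discretization map on `M`. -/
theorem lifted_euler_discretization_map {n : ℕ}
    (M N : Set (Fin n → ℝ)) (hM : IsOpen M) (hN : IsOpen N)
    (Φ Ψ : (Fin n → ℝ) → (Fin n → ℝ))
    (hΦsmooth : ContDiffOn ℝ (⊤ : ℕ∞) Φ M)
    (hΨsmooth : ContDiffOn ℝ (⊤ : ℕ∞) Ψ N)
    (hΦmaps : Φ '' M = N)
    (hΨΦ : ∀ ξ ∈ M, Ψ (Φ ξ) = ξ)
    (hΦΨ : ∀ z ∈ N, Φ (Ψ z) = z) :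
    IsDiscretizationMap N
      {p : (Fin n → ℝ) × (Fin n → ℝ) | p.1 ∈ N ∧ p.1 + p.2 ∈ N}
      (fun p => (p.1, p.1 + p.2)) ∧
    IsDiscretizationMap M
      {p : (Fin n → ℝ) × (Fin n → ℝ) | p.1 ∈ M ∧ Φ p.1 + fderiv ℝ Φ p.1 p.2 ∈ N}
      (fun p => (p.1, Ψ (Φ p.1 + fderiv ℝ Φ p.1 p.2))) := by
  exact lifted_euler_discretization_map_general M N hM hN Φ Ψ hΦsmooth hΨsmooth
    (hΦmaps ▸ mapsTo_image Φ M) (LeftInvOn.mapsTo hΨΦ hΦmaps.ge) hΨΦ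
end
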